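/- arXiv:1701.00650 — 2 statements merged into one kernel-verified Lean document; each statement's English description precedes it below -/
import Mathlib

section
/- A DCTRS R is U-WLL (i.e., U(R) is WLL) if and only if all unconditional rules of R are WLL and every conditional rule l → r ⇐ s1 ≈ t1, …, sk ≈ tk (k > 0) of R satisfies both: (a) the term sequence l, t1, …, t_{k−1} is linear (no variable occurs more than once in the whole sequence), and (b) |l, t1, …, tk|_x ≤ 1 for every variable x ∈ Var(r). -/
set_option autoImplicit false

/-- First-order terms over a signature `F` and variables `V`. -/
inductive Term (F : Type) (V : Type) : Type where
  | var : V → Term F V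
  | app : F → List (Term F V) → Term F V

namespace Term

variable {F V G W : Type}

/-- Application of a substitution. -/
def subst (σ : V → Term F W) : Term F V → Term F W
  | .var x => σ x
  | .app f ts => .app f (ts.attach.map (fun ⟨t, _⟩ => subst σ t))

/-- Renaming of variables. -/
def rename (g : V → W) (t : Term F V) : Term F W := t.subst (fun x => .var (g x))

/-- Mapping of function symbols. -/
def mapF (g : F → G) : Term F V → Term G V
  | .var x => .var x
  | .app f ts => .app (g f) (ts.attach.map (fun ⟨t, _⟩ => mapF g t))

/-- Number of occurrences of the variable `x` in a term. -/
def count [DecidableEq V] (x : V) : Term F V → ℕ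
  | .var y => if y = x then 1 else 0
  | .app _ ts => (ts.attach.map (fun ⟨t, _⟩ => count x t)).sum

/-- The list of variables occurring in a term (with repetitions). -/
def varList : Term F V → List V
  | .var x => [x]
  | .app _ ts => ts.attach.flatMap (fun ⟨t, _⟩ => varList t)

/-- A term is linear if every variable occurs at most once in it. -/
def Linear [DecidableEq V] (t : Term F V) : Prop := ∀ x : V, t.count x ≤ 1

/-- Well-formedness of a term with respect to an arity assignment. -/
inductive WF (ar : F → ℕ) : Term F V → Prop where
  | var (x : V) : WF ar (.var x)
  | app (f : F) (ts : List (Term F V)) :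
      ts.length = ar f → (∀ t ∈ ts, WF ar t) → WF ar (.app f ts)

end Term

/-- Number of occurrences of `x` in a sequence of terms. -/
def seqCount {F V : Type} [DecidableEq V] (x : V) (ts : List (Term F V)) : ℕ :=
  (ts.map (Term.count x)).sum

/-- An oriented conditional rewrite rule `l → r ⇐ s1 ≈ t1, …, sk ≈ tk`. -/
structure CRule (F V : Type) : Type where
  lhs : Term F V
  rhs : Term F V
  conds : List (Term F V × Term F V)

/-- A conditional term rewriting system: a set of conditional rules. -/
abbrev CTRS (F V : Type) := Set (CRule F V)

namespace CRule

variable {F V W : Type}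

/-- The sequence `l, t1, …, tk` of "pattern" terms of a rule. -/
def pats (ρ : CRule F V) : List (Term F V) := ρ.lhs :: ρ.conds.map Prod.snd

/-- The sequence `r, s1, …, sk` of "source" terms of a rule. -/
def srcs (ρ : CRule F V) : List (Term F V) := ρ.rhs :: ρ.conds.map Prod.fst

/-- Weak left-linearity: `|l,t1,…,tk|_x = 1` for every `x ∈ Var(r,s1,…,sk)`. -/
def WLL [DecidableEq V] (ρ : CRule F V) : Prop :=
  ∀ x : V, 0 < seqCount x ρ.srcs → seqCount x ρ.pats = 1

/-- Determinism: `Var(si) ⊆ Var(l, t1, …, t_{i−1})`. -/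
def Det [DecidableEq V] (ρ : CRule F V) : Prop :=
  ∀ i : ℕ, ∀ h : i < ρ.conds.length, ∀ x : V,
    0 < Term.count x (ρ.conds.get ⟨i, h⟩).1 →
    0 < seqCount x (ρ.lhs :: (ρ.conds.take i).map Prod.snd)

/-- Type 3: `Var(r) ⊆ Var(l, s1, t1, …, sk, tk)`. -/
def Type3 [DecidableEq V] (ρ : CRule F V) : Prop :=
  ∀ x : V, 0 < Term.count x ρ.rhs →
    0 < seqCount x (ρ.lhs :: ρ.conds.flatMap (fun c => [c.1, c.2]))

/-- The left-hand side is a non-variable term. -/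
def LhsNonVar (ρ : CRule F V) : Prop := ∀ x : V, ρ.lhs ≠ .var x

/-- Renaming the variables of a rule. -/
def mapV (g : V → W) (ρ : CRule F V) : CRule F W :=
  ⟨ρ.lhs.rename g, ρ.rhs.rename g, ρ.conds.map (fun c => (c.1.rename g, c.2.rename g))⟩

end CRule

/-- `R` is a deterministic CTRS (of Type 3, left-hand sides non-variable). -/
def IsDCTRS {F V : Type} [DecidableEq V] (R : CTRS F V) : Prop :=
  ∀ ρ ∈ R, ρ.Det ∧ ρ.Type3 ∧ ρ.LhsNonVar

/-- All rules of `R` are weakly left-linear. -/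
def IsWLL {F V : Type} [DecidableEq V] (R : CTRS F V) : Prop := ∀ ρ ∈ R, ρ.WLL

/-- Closure of a relation under contexts (rewriting below the root). -/
inductive CtxStep {F V : Type} (root : Term F V → Term F V → Prop) :
    Term F V → Term F V → Prop where
  | root {s t : Term F V} : root s t → CtxStep root s t
  | congr {f : F} {pre post : List (Term F V)} {s t : Term F V} :
      CtxStep root s t →
      CtxStep root (.app f (pre ++ s :: post)) (.app f (pre ++ t :: post))

/-- A root rewrite step using a rule of `R`, conditions evaluated with `prev`. -/
def RootStep {F V : Type} (R : CTRS F V) (prev : Term F V → Term F V → Prop)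
    (s t : Term F V) : Prop :=
  ∃ ρ ∈ R, ∃ σ : V → Term F V,
    s = ρ.lhs.subst σ ∧ t = ρ.rhs.subst σ ∧
    ∀ c ∈ ρ.conds, Relation.ReflTransGen prev (c.1.subst σ) (c.2.subst σ)

/-- The level-stratified reduction relation `→_{(n),R}`. -/
def LevelStep {F V : Type} (R : CTRS F V) : ℕ → Term F V → Term F V → Prop
  | 0 => fun _ _ => False
  | n + 1 => CtxStep (RootStep R (LevelStep R n))

/-- The reduction relation `→_R = ⋃_{n} →_{(n),R}`. -/
def Red {F V : Type} (R : CTRS F V) (s t : Term F V) : Prop :=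
  ∃ n : ℕ, LevelStep R n s t

/-- Many-step reduction `→*_R`. -/
def RedStar {F V : Type} (R : CTRS F V) : Term F V → Term F V → Prop :=
  Relation.ReflTransGen (Red R)

/-- `n`-fold composition of a relation. -/
def NFold {α : Type} (r : α → α → Prop) : ℕ → α → α → Prop
  | 0 => fun a b => a = b
  | n + 1 => fun a c => ∃ b, r a b ∧ NFold r n b c

/-- One-hole contexts. -/
inductive Ctx (F V : Type) : Type where
  | hole : Ctx F V
  | app : F → List (Term F V) → Ctx F V → List (Term F V) → Ctx F V

/-- Filling the hole of a context with a term. -/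
def Ctx.fill {F V : Type} : Ctx F V → Term F V → Term F V
  | .hole, t => t
  | .app f pre C post, t => .app f (pre ++ C.fill t :: post)
/-- Signature extended with the fresh symbols `U^ρ_i`. -/
abbrev UF (F V : Type) := F ⊕ (CRule F V × ℕ)

/-- Embedding of terms over `F` into terms over the extended signature `U_R(F)`. -/
def liftF {F V : Type} (t : Term F V) : Term (UF F V) V := t.mapF Sum.inl

/-- The list `X⃗_i` enumerating `Var(l, t1, …, t_{i−1})` in a fixed order. -/
def Xlist {F V : Type} [DecidableEq V] (ρ : CRule F V) (i : ℕ) : List V :=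
  (ρ.lhs.varList ++ ((ρ.conds.take (i - 1)).map Prod.snd).flatMap Term.varList).dedup

/-- A dummy condition (used as a default, never relevant). -/
def dummyCond {F V : Type} (ρ : CRule F V) : Term F V × Term F V := (ρ.lhs, ρ.lhs)

/-- The term `U^ρ_i(t, X⃗_i)`. -/
def uterm {F V : Type} [DecidableEq V] (ρ : CRule F V) (i : ℕ) (t : Term F V) :
    Term (UF F V) V :=
  .app (Sum.inr (ρ, i)) (liftF t :: (Xlist ρ i).map Term.var)

/-- Left-hand side of the `j`-th unraveled rule of `ρ` (j = 0, …, k). -/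
def ulhs {F V : Type} [DecidableEq V] (ρ : CRule F V) (j : ℕ) : Term (UF F V) V :=
  if j = 0 then liftF ρ.lhs
  else uterm ρ j (ρ.conds.getD (j - 1) (dummyCond ρ)).2

/-- Right-hand side of the `j`-th unraveled rule of `ρ` (j = 0, …, k). -/
def urhs {F V : Type} [DecidableEq V] (ρ : CRule F V) (j : ℕ) : Term (UF F V) V :=
  if j = ρ.conds.length then liftF ρ.rhs
  else uterm ρ (j + 1) (ρ.conds.getD j (dummyCond ρ)).1

/-- The unconditional rules `U(ρ)` obtained by unraveling the rule `ρ`. -/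
def URules {F V : Type} [DecidableEq V] (ρ : CRule F V) : Set (CRule (UF F V) V) :=
  { r | ∃ j ≤ ρ.conds.length, r = ⟨ulhs ρ j, urhs ρ j, []⟩ }

/-- The simultaneous unraveling `U(R)` of a DCTRS `R`. -/
def USys {F V : Type} [DecidableEq V] (R : CTRS F V) : CTRS (UF F V) V :=
  ⋃ ρ ∈ R, URules ρ

/-- `R` is ultra-WLL (`U`-WLL): every rule of `U(R)` is WLL. -/
def IsUWLL {F V : Type} [DecidableEq V] (R : CTRS F V) : Prop :=
  ∀ r ∈ USys R, r.WLL

/-!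
Fix a rule `ρ` and a variable `x`, and let `pⱼ = |l, t₁, …, tⱼ|_x`. The sequence `X⃗ⱼ` contains `x`
once if `0 < pⱼ₋₁` and not at all otherwise, so for `j > 0` the left-hand side of the `j`-th
unraveled rule contains `x` exactly `|tⱼ|_x + min 1 pⱼ₋₁` times, which is `pⱼ` as soon as
`pⱼ₋₁ ≤ 1`. By determinism, `x` occurs in the right-hand side of the `j`-th rule, `j < k`, iff
`0 < pⱼ`. Going through the rules in order, their weak left-linearity thus amounts to `pⱼ ≤ 1` for
`j < k` together with `pₖ = 1` for `x ∈ Var(r)`; here `0 < pₖ` is automatic for a deterministic rule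
of Type 3.
-/

section Occurrences

variable {F G V : Type} [DecidableEq V] {x : V}

@[simp]
theorem seqCount_nil : seqCount x ([] : List (Term F V)) = 0 := rfl

@[simp]
theorem seqCount_cons (t : Term F V) (ts : List (Term F V)) :
    seqCount x (t :: ts) = t.count x + seqCount x ts := by
  simp only [seqCount, List.map_cons, List.sum_cons]

theorem seqCount_singleton (t : Term F V) : seqCount x [t] = t.count x := by
  rw [seqCount_cons, seqCount_nil, add_zero]

@[simp]
theorem seqCount_append (ss ts : List (Term F V)) :
    seqCount x (ss ++ ts) = seqCount x ss + seqCount x ts := by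
  simp only [seqCount, List.map_append, List.sum_append]

theorem seqCount_pos_iff {ts : List (Term F V)} :
    0 < seqCount x ts ↔ ∃ t ∈ ts, 0 < t.count x := by
  simp only [seqCount, List.sum_pos_iff_exists_pos_nat, List.mem_map, exists_exists_and_eq_and]

theorem seqCount_le_of_sublist {ss ts : List (Term F V)} (h : ss.Sublist ts) :
    seqCount x ss ≤ seqCount x ts :=
  (h.map _).sum_le_sum fun _ _ => Nat.zero_le _

theorem seqCount_map_var (xs : List V) :
    seqCount x (xs.map (Term.var : V → Term F V)) = xs.count x := by
  induction xs with
  | nil => rfl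
  | cons y ys ih =>
    simp only [List.map_cons, seqCount_cons, ih, Term.count, List.count_cons, beq_iff_eq, add_comm]

namespace Term

theorem count_app (f : F) (ts : List (Term F V)) : (app f ts).count x = seqCount x ts := by
  simp only [count, seqCount, List.map_attach_eq_pmap, List.pmap_eq_map]

theorem count_mapF (g : F → G) : ∀ t : Term F V, (t.mapF g).count x = t.count x
  | .var _ => by simp only [mapF, count]
  | .app f ts => by
    rw [mapF, count_app, count, seqCount, List.map_map]
    refine congrArg List.sum (List.map_congr_left ?_)
    rintro ⟨t, ht⟩ -
    exact count_mapF g t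

theorem mem_varList_iff : ∀ {t : Term F V}, x ∈ t.varList ↔ 0 < t.count x
  | .var y => by
    rw [varList, count, List.mem_singleton, eq_comm]
    split_ifs with h <;> simp only [h, zero_lt_one, lt_irrefl]
  | .app f ts => by
    rw [count_app, seqCount_pos_iff, varList, List.mem_flatMap]
    constructor
    · rintro ⟨⟨t, ht⟩, -, hx⟩
      exact ⟨t, ht, mem_varList_iff.1 hx⟩
    · rintro ⟨t, ht, hx⟩
      exact ⟨⟨t, ht⟩, List.mem_attach _ _, mem_varList_iff.2 hx⟩

end Term

theorem count_liftF (t : Term F V) : (liftF t).count x = t.count x :=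
  Term.count_mapF Sum.inl t

end Occurrences

namespace CRule

/-- The sequence `l, t1, …, ti` consisting of the first `i + 1` patterns of a rule; the variables of
`Xlist ρ (i + 1)` are those of `ρ.patPrefix i`. -/
def patPrefix {F V : Type} (ρ : CRule F V) (i : ℕ) : List (Term F V) :=
  ρ.lhs :: (ρ.conds.take i).map Prod.snd

variable {F V : Type} {ρ : CRule F V}

theorem patPrefix_length : ρ.patPrefix ρ.conds.length = ρ.pats := by
  rw [patPrefix, pats, List.take_length]

variable [DecidableEq V] {x : V} {i j : ℕ}

theorem seqCount_patPrefix_zero : seqCount x (ρ.patPrefix 0) = ρ.lhs.count x := by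
  simp only [patPrefix, List.take_zero, List.map_nil, seqCount_singleton]

theorem seqCount_patPrefix_succ (hi : i < ρ.conds.length) :
    seqCount x (ρ.patPrefix (i + 1)) = seqCount x (ρ.patPrefix i) + ρ.conds[i].2.count x := by
  rw [patPrefix, List.take_succ_eq_append_getElem hi, List.map_append, ← List.cons_append,
    seqCount_append, List.map_singleton, ← patPrefix, seqCount_singleton]

theorem seqCount_patPrefix_mono (hij : i ≤ j) :
    seqCount x (ρ.patPrefix i) ≤ seqCount x (ρ.patPrefix j) :=
  seqCount_le_of_sublist (((List.take_sublist_take_left hij).map _).cons_cons _)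

theorem seqCount_patPrefix_le_pats : seqCount x (ρ.patPrefix i) ≤ seqCount x ρ.pats :=
  seqCount_le_of_sublist (((List.take_sublist _ _).map _).cons_cons _)

theorem Det.of_conds_eq_nil (hc : ρ.conds = []) : ρ.Det := fun i hi => by
  simp only [hc, List.length_nil, Nat.not_lt_zero] at hi

theorem Det.seqCount_patPrefix_pos (hdet : ρ.Det) (hi : i < ρ.conds.length)
    (hx : 0 < ρ.conds[i].1.count x) : 0 < seqCount x (ρ.patPrefix i) :=
  hdet i hi x hx

theorem Det.seqCount_pats_pos (hdet : ρ.Det) (htype : ρ.Type3) (hx : 0 < ρ.rhs.count x) :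
    0 < seqCount x ρ.pats := by
  obtain ⟨t, ht, hxt⟩ := seqCount_pos_iff.1 (htype x hx)
  simp only [List.mem_cons, List.mem_flatMap, List.not_mem_nil, or_false] at ht
  obtain rfl | ⟨c, hc, rfl | rfl⟩ := ht
  · exact seqCount_pos_iff.2 ⟨_, List.mem_cons_self, hxt⟩
  · obtain ⟨i, hi, rfl⟩ := List.getElem_of_mem hc
    exact (hdet.seqCount_patPrefix_pos hi hxt).trans_le seqCount_patPrefix_le_pats
  · exact seqCount_pos_iff.2 ⟨_, List.mem_cons_of_mem _ (List.mem_map_of_mem hc), hxt⟩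

theorem forall_seqCount_patPrefix_le_one_iff (hc : ρ.conds ≠ []) :
    (∀ j < ρ.conds.length, ∀ x, seqCount x (ρ.patPrefix j) ≤ 1) ↔
      ∀ x, seqCount x (ρ.lhs :: ρ.conds.dropLast.map Prod.snd) ≤ 1 := by
  have hpos : 0 < ρ.conds.length := List.length_pos_iff.2 hc
  rw [List.dropLast_eq_take]
  exact ⟨fun h => h _ (Nat.sub_one_lt_of_lt hpos),
    fun h j hj x => (seqCount_patPrefix_mono (Nat.le_sub_one_of_lt hj)).trans (h x)⟩

theorem wll_iff_of_conds_eq_nil (hc : ρ.conds = []) :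
    ρ.WLL ↔ ∀ x, 0 < ρ.rhs.count x → seqCount x ρ.pats = 1 := by
  simp only [WLL, srcs, hc, List.map_nil, seqCount_singleton]

end CRule

section Unraveling

variable {F V : Type} [DecidableEq V] {ρ : CRule F V} {x : V} {j : ℕ}

theorem mem_Xlist_succ_iff : x ∈ Xlist ρ (j + 1) ↔ 0 < seqCount x (ρ.patPrefix j) := by
  simp only [Xlist, CRule.patPrefix, seqCount_pos_iff, Nat.add_sub_cancel, List.mem_dedup,
    List.mem_append, List.mem_flatMap, List.exists_mem_cons_iff, Term.mem_varList_iff]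

theorem count_uterm_succ (t : Term F V) :
    (uterm ρ (j + 1) t).count x = t.count x + min 1 (seqCount x (ρ.patPrefix j)) := by
  have hX : (Xlist ρ (j + 1)).count x = min 1 (seqCount x (ρ.patPrefix j)) := by
    have hnodup : (Xlist ρ (j + 1)).Nodup := List.nodup_dedup _
    rw [hnodup.count]
    simp only [mem_Xlist_succ_iff]
    split_ifs <;> omega
  rw [uterm, Term.count_app, seqCount_cons, count_liftF, seqCount_map_var, hX]

theorem count_ulhs_zero : (ulhs ρ 0).count x = seqCount x (ρ.patPrefix 0) := by
  rw [ulhs, if_pos rfl, count_liftF, CRule.seqCount_patPrefix_zero]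

theorem count_ulhs_succ (hj : j < ρ.conds.length) :
    (ulhs ρ (j + 1)).count x =
      ρ.conds[j].2.count x + min 1 (seqCount x (ρ.patPrefix j)) := by
  rw [ulhs, if_neg j.succ_ne_zero, count_uterm_succ, Nat.add_sub_cancel,
    List.getD_eq_getElem _ _ hj]

theorem count_ulhs_of_linear (hj : j ≤ ρ.conds.length)
    (hlin : ∀ i < j, seqCount x (ρ.patPrefix i) ≤ 1) :
    (ulhs ρ j).count x = seqCount x (ρ.patPrefix j) := by
  cases j with
  | zero => exact count_ulhs_zero
  | succ j =>
    rw [count_ulhs_succ hj, CRule.seqCount_patPrefix_succ hj, min_eq_right (hlin j j.lt_succ_self),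
      add_comm]

theorem count_urhs_length : (urhs ρ ρ.conds.length).count x = ρ.rhs.count x := by
  rw [urhs, if_pos rfl, count_liftF]

theorem count_urhs_pos_iff (hdet : ρ.Det) (hj : j < ρ.conds.length) :
    0 < (urhs ρ j).count x ↔ 0 < seqCount x (ρ.patPrefix j) := by
  have hs := hdet.seqCount_patPrefix_pos (x := x) hj
  rw [urhs, if_neg hj.ne, count_uterm_succ, List.getD_eq_getElem _ _ hj]
  omega

theorem forall_count_ulhs_eq_one_iff :
    (∀ j < ρ.conds.length, ∀ x, 0 < seqCount x (ρ.patPrefix j) → (ulhs ρ j).count x = 1) ↔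
      ∀ j < ρ.conds.length, ∀ x, seqCount x (ρ.patPrefix j) ≤ 1 := by
  constructor
  · intro h j
    induction j using Nat.strong_induction_on with
    | h j ih =>
      intro hj x
      have hcount : (ulhs ρ j).count x = seqCount x (ρ.patPrefix j) :=
        count_ulhs_of_linear hj.le fun i hi => ih i hi (hi.trans hj) x
      have hone := h j hj x
      omega
  · intro hlin j hj x hx
    rw [count_ulhs_of_linear hj.le fun i hi => hlin i (hi.trans hj) x]
    exact (hlin j hj x).antisymm hx

theorem forall_mem_URules_wll_iff_count :
    (∀ u ∈ URules ρ, u.WLL) ↔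
      ∀ j ≤ ρ.conds.length, ∀ x, 0 < (urhs ρ j).count x → (ulhs ρ j).count x = 1 := by
  simp only [URules, Set.mem_ofPred_eq, forall_exists_index, and_imp]
  constructor
  · intro h j hj
    exact (CRule.wll_iff_of_conds_eq_nil rfl).1 (h _ j hj rfl)
  · rintro h _ j hj rfl
    exact (CRule.wll_iff_of_conds_eq_nil rfl).2 (h j hj)

theorem forall_mem_URules_wll_iff (hdet : ρ.Det) :
    (∀ u ∈ URules ρ, u.WLL) ↔
      (∀ j < ρ.conds.length, ∀ x, seqCount x (ρ.patPrefix j) ≤ 1) ∧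
        ∀ x, 0 < ρ.rhs.count x → seqCount x ρ.pats = 1 := by
  have hinit : (∀ j < ρ.conds.length, ∀ x, 0 < (urhs ρ j).count x → (ulhs ρ j).count x = 1) ↔
      ∀ j < ρ.conds.length, ∀ x, seqCount x (ρ.patPrefix j) ≤ 1 := by
    rw [← forall_count_ulhs_eq_one_iff]
    exact forall₃_congr fun j hj x => imp_congr_left (count_urhs_pos_iff hdet hj)
  simp only [forall_mem_URules_wll_iff_count, ← Nat.lt_add_one_iff (n := ρ.conds.length)]
  rw [Nat.forall_lt_succ_right, hinit]
  refine and_congr_right fun hlin => forall_congr' fun x => ?_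
  rw [count_urhs_length, count_ulhs_of_linear le_rfl fun i hi => hlin i hi x,
    CRule.patPrefix_length]

theorem forall_mem_URules_wll_iff_of_conds_eq_nil (hc : ρ.conds = []) :
    (∀ u ∈ URules ρ, u.WLL) ↔ ρ.WLL := by
  rw [forall_mem_URules_wll_iff (.of_conds_eq_nil hc), CRule.wll_iff_of_conds_eq_nil hc,
    and_iff_right]
  simp only [hc, List.length_nil, Nat.not_lt_zero, IsEmpty.forall_iff, implies_true]

theorem forall_mem_URules_wll_iff_of_conds_ne_nil (hc : ρ.conds ≠ []) (hdet : ρ.Det)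
    (htype : ρ.Type3) :
    (∀ u ∈ URules ρ, u.WLL) ↔
      (∀ x, seqCount x (ρ.lhs :: ρ.conds.dropLast.map Prod.snd) ≤ 1) ∧
        ∀ x, 0 < ρ.rhs.count x → seqCount x ρ.pats ≤ 1 := by
  rw [forall_mem_URules_wll_iff hdet, CRule.forall_seqCount_patPrefix_le_one_iff hc]
  refine and_congr_right' (forall₂_congr fun x hx => ?_)
  have hpos := hdet.seqCount_pats_pos htype hx
  omega

theorem isUWLL_iff {R : CTRS F V} : IsUWLL R ↔ ∀ ρ ∈ R, ∀ u ∈ URules ρ, u.WLL := by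
  simp only [IsUWLL, USys, Set.mem_iUnion, forall_exists_index]
  exact ⟨fun h ρ hρ u hu => h u ρ hρ hu, fun h u ρ hρ hu => h ρ hρ u hu⟩

end Unraveling

/-- **Characterization of the `U`-WLL property.**
A DCTRS `R` is `U`-WLL iff all its unconditional rules are WLL and every
conditional rule `l → r ⇐ s1 ≈ t1, …, sk ≈ tk` (k > 0) satisfies:
(a) the sequence `l, t1, …, t_{k−1}` is linear, and
(b) `|l, t1, …, tk|_x ≤ 1` for every variable `x ∈ Var(r)`. -/
theorem UWLL_characterization {F V : Type} [DecidableEq V]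
    (R : CTRS F V) (hD : IsDCTRS R) :
    IsUWLL R ↔
      ((∀ ρ ∈ R, ρ.conds = [] → ρ.WLL) ∧
       (∀ ρ ∈ R, ρ.conds ≠ [] →
          ((∀ x : V, seqCount x (ρ.lhs :: ρ.conds.dropLast.map Prod.snd) ≤ 1) ∧
           (∀ x : V, 0 < ρ.rhs.count x → seqCount x ρ.pats ≤ 1)))) := by
  rw [isUWLL_iff]
  constructor
  · intro hU
    refine ⟨fun ρ hρ hc => ?_, fun ρ hρ hc => ?_⟩
    · exact (forall_mem_URules_wll_iff_of_conds_eq_nil hc).1 (hU ρ hρ)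
    · obtain ⟨hdet, htype, -⟩ := hD ρ hρ
      exact (forall_mem_URules_wll_iff_of_conds_ne_nil hc hdet htype).1 (hU ρ hρ)
  · rintro ⟨huncond, hcond⟩ ρ hρ
    obtain ⟨hdet, htype, -⟩ := hD ρ hρ
    by_cases hc : ρ.conds = []
    · exact (forall_mem_URules_wll_iff_of_conds_eq_nil hc).2 (huncond ρ hρ hc)
    · exact (forall_mem_URules_wll_iff_of_conds_ne_nil hc hdet htype).2 (hcond ρ hρ hc)
end

section
/- Let R be a WLL DCTRS over a signature F and s, t ∈ T(F,V). If s reduces to t in n steps at level m of the level-stratified reduction relation of T(R) (s →^n_{(m),T(R)} t), then s →*_R t. -/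
set_option autoImplicit false

/-- Embedding of a rule over `F` into the signature `F ⊕ ℕ` extended with the
fresh tuple constructors `tuple_j` (encoded as `Sum.inr j`). -/
def CRule.liftT {F V : Type} (ρ : CRule F V) : CRule (F ⊕ ℕ) V :=
  ⟨ρ.lhs.mapF Sum.inl, ρ.rhs.mapF Sum.inl,
   ρ.conds.map (fun c => (c.1.mapF Sum.inl, c.2.mapF Sum.inl))⟩

/-- The variable `x` occurs somewhere in the rule `ρ`. -/
def OccursInRule {F V : Type} [DecidableEq V] (ρ : CRule F V) (x : V) : Prop :=
  0 < seqCount x (ρ.lhs :: ρ.rhs :: ρ.conds.flatMap (fun c => [c.1, c.2]))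

/-- `ρ'` is a result of applying the transformation `𝕋` to the rule `ρ`:
unconditional rules are kept (embedded into the extended signature); for a
conditional rule, every occurrence of a variable occurring more than once in
`l, t1, …, tk` is replaced by a distinct fresh variable (yielding `l'` and
`t'_1, …, t'_k`), and the condition
`tuple_j(x1,…,xj) ≈ tuple_j(x1σ,…,xjσ)` is appended, where `x1, …, xj` are the
introduced fresh variables and `σ` is the renaming mapping them back to the
original variables. -/
def IsTRule {F V : Type} [DecidableEq V] (ρ : CRule F V) (ρ' : CRule (F ⊕ ℕ) V) : Prop :=
  (ρ.conds = [] ∧ ρ' = ρ.liftT) ∨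
  (ρ.conds ≠ [] ∧
    ∃ (xs : List V) (σ : V → V) (l' : Term (F ⊕ ℕ) V) (ts' : List (Term (F ⊕ ℕ) V)),
      xs.Nodup ∧
      (∀ x ∈ xs, ¬ OccursInRule ρ x) ∧
      (∀ x : V, x ∉ xs → σ x = x) ∧
      ts'.length = ρ.conds.length ∧
      l'.rename σ = ρ.lhs.mapF Sum.inl ∧
      (∀ (i : ℕ) (h : i < ρ.conds.length) (h' : i < ts'.length),
        (ts'.get ⟨i, h'⟩).rename σ = ((ρ.conds.get ⟨i, h⟩).2).mapF Sum.inl) ∧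
      (∀ x ∈ xs, seqCount x (l' :: ts') = 1) ∧
      (∀ x : V, x ∉ xs →
        seqCount x (l' :: ts') =
          if seqCount x ρ.liftT.pats ≤ 1 then seqCount x ρ.liftT.pats else 0) ∧
      ρ' = ⟨l', ρ.rhs.mapF Sum.inl,
            (List.zip (ρ.conds.map (fun c => c.1.mapF Sum.inl)) ts') ++
              [(.app (Sum.inr xs.length) (xs.map Term.var),
                .app (Sum.inr xs.length) (xs.map (fun x => Term.var (σ x))))]⟩)

/-- `R'` is a result of applying the transformation `𝕋` to the CTRS `R`,
i.e., `R' = { 𝕋(ρ) : ρ ∈ R }`. -/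
def IsT {F V : Type} [DecidableEq V] (R : CTRS F V) (R' : CTRS (F ⊕ ℕ) V) : Prop :=
  (∀ ρ ∈ R, ∃ ρ' ∈ R', IsTRule ρ ρ') ∧ (∀ ρ' ∈ R', ∃ ρ ∈ R, IsTRule ρ ρ')

/-!
Collapse every tuple-headed subterm of a term over `F ⊕ ℕ` to a fixed term over `F`. This projection
is a left inverse of the embedding of `T(F, V)`, and it maps each step of `𝕋(R)` to a reduction of
`R`. Indeed, consider an instance `τ` of a transformed conditional rule. No left-hand side of `𝕋(R)`
has a tuple symbol at its root, so the tuple condition can only be satisfied componentwise, giving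
`xᵢτ →* xᵢστ` for each fresh variable `xᵢ`. After projection, by induction on the level,
`l'τ →* l'στ = lτ` and `sᵢτ →* t'ᵢτ →* t'ᵢστ = tᵢτ`, so that the original rule applies to `lτ` and
yields `rτ`.
-/

open Relation Filter

variable {F G V W X : Type}

namespace Term

@[elab_as_elim, induction_eliminator]
theorem induction {P : Term F V → Prop} (var : ∀ x, P (.var x))
    (app : ∀ f ts, (∀ t ∈ ts, P t) → P (.app f ts)) : ∀ t, P t
  | .var x => var x
  | .app f ts => app f ts fun t _ => induction var app t

@[simp]
theorem subst_var (σ : V → Term F W) (x : V) : (var x).subst σ = σ x := by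
  simp only [subst]

@[simp]
theorem subst_app (σ : V → Term F W) (f : F) (ts : List (Term F V)) :
    (app f ts).subst σ = app f (ts.map (subst σ)) := by
  simp [subst]

@[simp]
theorem rename_var (g : V → W) (x : V) : (var x : Term F V).rename g = var (g x) :=
  subst_var _ x

@[simp]
theorem rename_app (g : V → W) (f : F) (ts : List (Term F V)) :
    (app f ts).rename g = app f (ts.map (rename g)) :=
  subst_app _ f ts

@[simp]
theorem mapF_var (g : F → G) (x : V) : (var x).mapF g = var x := by
  simp only [mapF]

@[simp]
theorem mapF_app (g : F → G) (f : F) (ts : List (Term F V)) :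
    (app f ts).mapF g = app (g f) (ts.map (mapF g)) := by
  simp [mapF]

theorem rename_id (t : Term F V) : t.rename id = t := by
  induction t with
  | var x => simp
  | app f ts ih => simp [List.map_congr_left ih]

theorem subst_rename (g : V → W) (θ : W → Term F X) (t : Term F V) :
    (t.rename g).subst θ = t.subst fun x => θ (g x) := by
  induction t with
  | var x => simp
  | app f ts ih => simpa using ih

theorem exists_mapF_eq_and_rename_eq {g : F → G} {σ : V → W} {u : Term G V} {t : Term F W}
    (h : u.rename σ = t.mapF g) : ∃ b : Term F V, u = b.mapF g ∧ b.rename σ = t := by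
  induction t generalizing u with
  | var y =>
    cases u with
    | var x => exact ⟨var x, by simpa using h⟩
    | app f us => simp at h
  | app f ts ih =>
    cases u with
    | var x => simp at h
    | app f' us =>
      simp only [rename_app, mapF_app, app.injEq] at h
      obtain ⟨rfl, h⟩ := h
      suffices ∃ bs : List (Term F V), us = bs.map (mapF g) ∧ bs.map (rename σ) = ts by
        obtain ⟨bs, rfl, rfl⟩ := this
        exact ⟨app f bs, by simp⟩
      induction ts generalizing us with
      | nil => exact ⟨[], by simpa using h⟩
      | cons t ts ihs =>
        obtain ⟨u, us, rfl, hu, hus⟩ := List.map_eq_cons_iff.1 h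
        obtain ⟨b, rfl, rfl⟩ := ih t List.mem_cons_self hu
        obtain ⟨bs, rfl, rfl⟩ := ihs (fun t ht => ih t (List.mem_cons_of_mem _ ht)) us hus
        exact ⟨b :: bs, rfl, rfl⟩

/-- The projection to terms over `F` of terms over its extension by tuple symbols `G`: every subterm
headed by a tuple symbol is collapsed to the fixed term `d`. -/
def proj (d : Term F V) : Term (F ⊕ G) V → Term F V
  | .var x => .var x
  | .app (.inl f) ts => .app f (ts.attach.map fun ⟨t, _⟩ => proj d t)
  | .app (.inr _) _ => d

@[simp]
theorem proj_var (d : Term F V) (x : V) : proj d (var x : Term (F ⊕ G) V) = var x := by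
  simp only [proj]

@[simp]
theorem proj_app_inl (d : Term F V) (f : F) (ts : List (Term (F ⊕ G) V)) :
    proj d (app (.inl f) ts) = app f (ts.map (proj d)) := by
  simp [proj]

@[simp]
theorem proj_app_inr (d : Term F V) (g : G) (ts : List (Term (F ⊕ G) V)) :
    proj d (app (.inr g) ts) = d := by
  simp only [proj]

theorem proj_mapF (d t : Term F V) : proj d (t.mapF (Sum.inl : F → F ⊕ G)) = t := by
  induction t with
  | var x => simp
  | app f ts ih =>
    rw [mapF_app, proj_app_inl, List.map_map]
    exact congrArg _ ((List.map_congr_left ih).trans (List.map_id' ts))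

theorem proj_subst_mapF (d : Term F W) (τ : V → Term (F ⊕ G) W) (t : Term F V) :
    proj d ((t.mapF Sum.inl).subst τ) = t.subst fun x => proj d (τ x) := by
  induction t with
  | var x => simp
  | app f ts ih => simpa using ih

end Term

theorem ctxStep_monotone : Monotone (CtxStep (F := F) (V := V)) := by
  intro r r' hr s t h
  induction h with
  | root h => exact .root (hr _ _ h)
  | congr _ ih => exact .congr ih

theorem rootStep_monotone (R : CTRS F V) : Monotone (RootStep R) := by
  rintro r r' hr s t ⟨ρ, hρ, σ, hs, ht, hc⟩
  exact ⟨ρ, hρ, σ, hs, ht, fun c hcρ => ReflTransGen.mono hr _ _ (hc c hcρ)⟩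

theorem levelStep_monotone (R : CTRS F V) : Monotone (LevelStep R) := by
  refine monotone_nat_of_le_succ fun n => ?_
  induction n with
  | zero => exact fun _ _ h => h.elim
  | succ n ih => exact ctxStep_monotone (rootStep_monotone R ih)

theorem NFold.reflTransGen {α : Type} {r : α → α → Prop} {n : ℕ} {a b : α} (h : NFold r n a b) :
    ReflTransGen r a b := by
  induction n generalizing a with
  | zero => exact h ▸ .refl
  | succ n ih =>
    obtain ⟨c, hac, hcb⟩ := h
    exact .head hac (ih hcb)

theorem NFold.redStar {R : CTRS F V} {m n : ℕ} {s t : Term F V}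
    (h : NFold (LevelStep R m) n s t) : RedStar R s t :=
  ReflTransGen.mono (fun _ _ hst => ⟨m, hst⟩) _ _ h.reflTransGen

theorem RedStar.eventually_levelStep {R : CTRS F V} {s t : Term F V} (h : RedStar R s t) :
    ∀ᶠ n in atTop, ReflTransGen (LevelStep R n) s t := by
  induction h with
  | refl => exact .of_forall fun _ => .refl
  | tail _ hst ih =>
    obtain ⟨k, hk⟩ := hst
    filter_upwards [ih, eventually_ge_atTop k] with n hn hkn
    exact hn.tail (levelStep_monotone R hkn _ _ hk)

theorem red_of_rule {R : CTRS F V} {ρ : CRule F V} (hρ : ρ ∈ R) {σ : V → Term F V}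
    (hc : ∀ c ∈ ρ.conds, RedStar R (c.1.subst σ) (c.2.subst σ)) :
    Red R (ρ.lhs.subst σ) (ρ.rhs.subst σ) := by
  obtain ⟨n, hn⟩ := ((eventually_all_finite ρ.conds.finite_toSet).2
    fun c hcρ => (hc c hcρ).eventually_levelStep).exists
  exact ⟨n + 1, .root ⟨ρ, hρ, σ, rfl, rfl, hn⟩⟩

theorem Red.congr {R : CTRS F V} {s t : Term F V} (h : Red R s t) (f : F)
    (pre post : List (Term F V)) :
    Red R (.app f (pre ++ s :: post)) (.app f (pre ++ t :: post)) := by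
  obtain ⟨_ | n, h⟩ := h
  · exact h.elim
  · exact ⟨n + 1, .congr h⟩

theorem RedStar.congr {R : CTRS F V} {s t : Term F V} (h : RedStar R s t) (f : F)
    (pre post : List (Term F V)) :
    RedStar R (.app f (pre ++ s :: post)) (.app f (pre ++ t :: post)) :=
  ReflTransGen.lift (p := Red R) (fun u => Term.app f (pre ++ u :: post))
    (fun _ _ hst => Red.congr hst f pre post) _ _ h

theorem redStar_app {R : CTRS F V} {ss ts : List (Term F V)} (h : List.Forall₂ (RedStar R) ss ts)
    (f : F) : RedStar R (.app f ss) (.app f ts) := by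
  suffices ∀ pre, RedStar R (.app f (pre ++ ss)) (.app f (pre ++ ts)) from this []
  induction h with
  | nil => exact fun _ => .refl
  | @cons s t ss ts hst _ ih =>
    intro pre
    have hrest := ih (pre ++ [t])
    simp only [List.append_assoc, List.singleton_append] at hrest
    exact (hst.congr f pre ss).trans hrest

theorem redStar_subst {R : CTRS F W} {θ θ' : V → Term F W} (h : ∀ x, RedStar R (θ x) (θ' x))
    (t : Term F V) : RedStar R (t.subst θ) (t.subst θ') := by
  induction t with
  | var x => simpa using h x
  | app f ts ih =>
    rw [Term.subst_app, Term.subst_app]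
    refine redStar_app ?_ f
    rwa [List.forall₂_map_left_iff, List.forall₂_map_right_iff, List.forall₂_same]

/-- The symbol `f` is a constructor of `R`: every left-hand side of `R` is headed by a function
symbol other than `f`. In particular, left-hand sides are not variables. -/
def IsConstructor (R : CTRS F V) (f : F) : Prop :=
  ∀ ρ ∈ R, ∃ g ts, ρ.lhs = .app g ts ∧ g ≠ f

theorem forall₂_trans {α : Type*} {r : α → α → Prop} [IsTrans α r] {as bs cs : List α}
    (hab : List.Forall₂ r as bs) (hbc : List.Forall₂ r bs cs) : List.Forall₂ r as cs := by
  induction hab generalizing cs with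
  | nil => exact hbc
  | cons h _ ih =>
    cases hbc with
    | cons h' hbc => exact .cons (_root_.trans h h') (ih hbc)

namespace IsConstructor

variable {R : CTRS F V} {f : F} {n : ℕ} {ss ts : List (Term F V)} {t : Term F V}

theorem not_rootStep (hf : IsConstructor R f) {prev : Term F V → Term F V → Prop} :
    ¬ RootStep R prev (.app f ss) t := by
  rintro ⟨ρ, hρ, σ, hs, -⟩
  obtain ⟨g, us, hl, hgf⟩ := hf ρ hρ
  rw [hl, Term.subst_app, Term.app.injEq] at hs
  exact hgf hs.1.symm

theorem exists_forall₂_of_levelStep (hf : IsConstructor R f)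
    (h : LevelStep R n (.app f ss) t) :
    ∃ ts, t = .app f ts ∧ List.Forall₂ (ReflTransGen (LevelStep R n)) ss ts := by
  cases n with
  | zero => exact h.elim
  | succ n =>
    generalize hs : Term.app f ss = s at h
    cases h with
    | root h => exact (hf.not_rootStep (hs ▸ h)).elim
    | @congr g pre post a b hab =>
      obtain ⟨rfl, rfl⟩ := Term.app.inj hs
      exact ⟨_, rfl, List.rel_append (List.forall₂_refl pre)
        (.cons (.single hab) (List.forall₂_refl post))⟩

theorem exists_forall₂_of_reflTransGen (hf : IsConstructor R f)
    (h : ReflTransGen (LevelStep R n) (.app f ss) t) :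
    ∃ ts, t = .app f ts ∧ List.Forall₂ (ReflTransGen (LevelStep R n)) ss ts := by
  induction h with
  | refl => exact ⟨ss, rfl, List.forall₂_refl ss⟩
  | tail _ hstep ih =>
    obtain ⟨us, rfl, hus⟩ := ih
    obtain ⟨ts, rfl, hts⟩ := hf.exists_forall₂_of_levelStep hstep
    exact ⟨ts, rfl, forall₂_trans hus hts⟩

theorem forall₂_of_reflTransGen (hf : IsConstructor R f)
    (h : ReflTransGen (LevelStep R n) (.app f ss) (.app f ts)) :
    List.Forall₂ (ReflTransGen (LevelStep R n)) ss ts := by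
  obtain ⟨us, hts, hus⟩ := hf.exists_forall₂_of_reflTransGen h
  exact (Term.app.inj hts).2 ▸ hus

end IsConstructor

/-- The rule `ρ'` arises from `ρ` by splitting variables that the renaming `σ` merges again, where
every variable moved by `σ` is guarded by a tuple condition. Both cases of `𝕋` are of this form: an
unconditional rule is split by the identity. -/
structure IsVarSplit (σ : V → V) (ρ : CRule F V) (ρ' : CRule (F ⊕ G) V) : Prop where
  lhs : ∃ l : Term F V, ρ'.lhs = l.mapF Sum.inl ∧ l.rename σ = ρ.lhs
  rhs : ρ'.rhs = ρ.rhs.mapF Sum.inl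
  conds : ∀ c ∈ ρ.conds, ∃ t : Term F V,
    (c.1.mapF Sum.inl, t.mapF Sum.inl) ∈ ρ'.conds ∧ t.rename σ = c.2
  guard : ∀ x, σ x ≠ x → ∃ (g : G) (xs : List V), x ∈ xs ∧
    (.app (Sum.inr g) (xs.map .var), .app (Sum.inr g) (xs.map fun y => .var (σ y))) ∈ ρ'.conds

theorem isVarSplit_liftT {ρ : CRule F V} : IsVarSplit id ρ ρ.liftT where
  lhs := ⟨ρ.lhs, rfl, ρ.lhs.rename_id⟩
  rhs := rfl
  conds c hc := ⟨c.2, List.mem_map_of_mem hc, c.2.rename_id⟩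
  guard _ hx := (hx rfl).elim

theorem IsTRule.exists_isVarSplit [DecidableEq V] {ρ : CRule F V} {ρ' : CRule (F ⊕ ℕ) V}
    (h : IsTRule ρ ρ') : ∃ σ, IsVarSplit σ ρ ρ' := by
  obtain ⟨-, rfl⟩ | ⟨-, xs, σ, l', ts', -, -, hσ, hlen, hl, hts, -, -, rfl⟩ := h
  · exact ⟨id, isVarSplit_liftT⟩
  refine ⟨σ, Term.exists_mapF_eq_and_rename_eq hl, rfl, fun c hc => ?_, fun x hx => ?_⟩
  · obtain ⟨i, hi, rfl⟩ := List.mem_iff_getElem.1 hc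
    have hi' : i < ts'.length := hlen ▸ hi
    obtain ⟨t, ht, htσ⟩ := Term.exists_mapF_eq_and_rename_eq (hts i hi hi')
    refine ⟨t, List.mem_append_left _ (List.mem_iff_getElem.2 ⟨i, ?_, ?_⟩), htσ⟩
    · simp [hi, hi']
    · simpa using ht
  · exact ⟨xs.length, xs, not_imp_comm.1 (hσ x) hx, List.mem_append_right _ List.mem_cons_self⟩

namespace IsVarSplit

variable {σ : V → V} {ρ : CRule F V} {ρ' : CRule (F ⊕ G) V} {τ : V → Term (F ⊕ G) V}

theorem exists_lhs_eq_app_inl (h : IsVarSplit σ ρ ρ') (hρ : ρ.LhsNonVar) :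
    ∃ f ts, ρ'.lhs = .app (.inl f) ts := by
  obtain ⟨l, hl, hlσ⟩ := h.lhs
  cases l with
  | var x => exact (hρ (σ x) (by rw [← hlσ, Term.rename_var])).elim
  | app f ts => exact ⟨f, ts.map (Term.mapF Sum.inl), by rw [hl, Term.mapF_app]⟩

theorem reflTransGen_of_conds (h : IsVarSplit σ ρ ρ') {R' : CTRS (F ⊕ G) V}
    (hR' : ∀ g, IsConstructor R' (.inr g)) {n : ℕ}
    (hc : ∀ c ∈ ρ'.conds, ReflTransGen (LevelStep R' n) (c.1.subst τ) (c.2.subst τ)) (x : V) :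
    ReflTransGen (LevelStep R' n) (τ x) (τ (σ x)) := by
  by_cases hx : σ x = x
  · rw [hx]
  obtain ⟨g, xs, hxs, hmem⟩ := h.guard x hx
  have htuple := hc _ hmem
  simp only [Term.subst_app, List.map_map] at htuple
  have hargs := (hR' g).forall₂_of_reflTransGen htuple
  rw [List.forall₂_map_left_iff, List.forall₂_map_right_iff, List.forall₂_same] at hargs
  simpa using hargs x hxs

theorem redStar_proj (h : IsVarSplit σ ρ ρ') {R : CTRS F V} (hρ : ρ ∈ R) {d : Term F V}
    (hσ : ∀ x, RedStar R (Term.proj d (τ x)) (Term.proj d (τ (σ x))))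
    (hc : ∀ c ∈ ρ'.conds, RedStar R (Term.proj d (c.1.subst τ)) (Term.proj d (c.2.subst τ))) :
    RedStar R (Term.proj d (ρ'.lhs.subst τ)) (Term.proj d (ρ'.rhs.subst τ)) := by
  have merge (t : Term F V) : RedStar R (Term.proj d ((t.mapF Sum.inl).subst τ))
      ((t.rename σ).subst fun x => Term.proj d (τ x)) := by
    rw [Term.proj_subst_mapF, Term.subst_rename]
    exact redStar_subst hσ t
  obtain ⟨l, hl, hlσ⟩ := h.lhs
  rw [hl, h.rhs, Term.proj_subst_mapF d τ ρ.rhs]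
  refine (hlσ ▸ merge l).tail (red_of_rule hρ fun c hcρ => ?_)
  obtain ⟨t, ht, htσ⟩ := h.conds c hcρ
  have hst := hc _ ht
  rw [Term.proj_subst_mapF d τ c.1] at hst
  exact hst.trans (htσ ▸ merge t)

end IsVarSplit

theorem CtxStep.redStar_proj {R : CTRS F V} {d : Term F V}
    {root : Term (F ⊕ G) V → Term (F ⊕ G) V → Prop}
    (hroot : ∀ u v, root u v → RedStar R (Term.proj d u) (Term.proj d v))
    {u v : Term (F ⊕ G) V} (h : CtxStep root u v) : RedStar R (Term.proj d u) (Term.proj d v) := by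
  induction h with
  | root h => exact hroot _ _ h
  | @congr f pre post s t _ ih =>
    cases f with
    | inl f => simpa using ih.congr f (pre.map (Term.proj d)) (post.map (Term.proj d))
    | inr g =>
      rw [Term.proj_app_inr, Term.proj_app_inr]
      exact .refl

theorem LevelStep.redStar_proj {R : CTRS F V} {R' : CTRS (F ⊕ G) V}
    (hR : ∀ ρ' ∈ R', ∃ ρ ∈ R, ∃ σ, IsVarSplit σ ρ ρ') (hR' : ∀ g, IsConstructor R' (.inr g))
    (d : Term F V) {n : ℕ} {u v : Term (F ⊕ G) V} (h : LevelStep R' n u v) :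
    RedStar R (Term.proj d u) (Term.proj d v) := by
  induction n generalizing u v with
  | zero => exact h.elim
  | succ n ih =>
    have lower {u v} (huv : ReflTransGen (LevelStep R' n) u v) :
        RedStar R (Term.proj d u) (Term.proj d v) :=
      ReflTransGen.lift' (Term.proj d) (fun _ _ hstep => ih hstep) u v huv
    refine CtxStep.redStar_proj ?_ h
    rintro _ _ ⟨ρ', hρ', τ, rfl, rfl, hc⟩
    obtain ⟨ρ, hρ, σ, hsplit⟩ := hR ρ' hρ'
    exact hsplit.redStar_proj hρ (fun x => lower (hsplit.reflTransGen_of_conds hR' hc x))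
      fun c hcρ' => lower (hc c hcρ')

theorem R_simulates_T_general [DecidableEq V] {R : CTRS F V} {R' : CTRS (F ⊕ ℕ) V}
    (hR : ∀ ρ ∈ R, ρ.LhsNonVar) (hT : IsT R R') {s t : Term F V}
    (h : RedStar R' (s.mapF Sum.inl) (t.mapF Sum.inl)) : RedStar R s t := by
  have hsplit (ρ') (hρ' : ρ' ∈ R') : ∃ ρ ∈ R, ∃ σ, IsVarSplit σ ρ ρ' := by
    obtain ⟨ρ, hρ, hρρ'⟩ := hT.2 ρ' hρ'
    exact ⟨ρ, hρ, hρρ'.exists_isVarSplit⟩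
  have hcons (j) : IsConstructor R' (.inr j) := by
    intro ρ' hρ'
    obtain ⟨ρ, hρ, σ, hρρ'⟩ := hsplit ρ' hρ'
    obtain ⟨f, ts, hl⟩ := hρρ'.exists_lhs_eq_app_inl (hR ρ hρ)
    exact ⟨.inl f, ts, hl, Sum.inl_ne_inr⟩
  have hproj : RedStar R (Term.proj s (s.mapF Sum.inl)) (Term.proj s (t.mapF Sum.inl)) :=
    ReflTransGen.lift' (Term.proj s) (fun _ _ ⟨_, hn⟩ => hn.redStar_proj hsplit hcons s) _ _ h
  rwa [Term.proj_mapF, Term.proj_mapF] at hproj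

/-- **Claim (ii) of Theorem `𝕋`-equivalence.**
Let `R` be a WLL DCTRS over `F` and `s, t ∈ T(F,V)`. If `s →^n_{(m),𝕋(R)} t`
(n steps at level m of the stratified reduction of `𝕋(R)`), then `s →*_R t`. -/
theorem R_simulates_T {F V : Type} [DecidableEq V]
    (R : CTRS F V) (R' : CTRS (F ⊕ ℕ) V)
    (hD : IsDCTRS R) (hW : IsWLL R) (hT : IsT R R')
    (s t : Term F V) (m n : ℕ)
    (h : NFold (LevelStep R' m) n (s.mapF Sum.inl) (t.mapF Sum.inl)) :
    RedStar R s t :=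
  R_simulates_T_general (fun ρ hρ => (hD ρ hρ).2.2) hT h.redStar
end
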